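/- Let P and Q be probability measures on a measurable space Y that are mutually absolutely continuous, let g = dQ/dP be the Radon–Nikodym derivative, and assume log g is P-integrable. Then g(y) − log g(y) − 1 ≥ 0 for P-almost every y, and ∫ ( g(y) − log g(y) − 1 ) dP(y) = KL(P‖Q). -/

import Mathlib

/-!
Since `P ≪ Q`, the density `g = dQ/dP` equals `exp (log g)` `P`-almost everywhere, so nonnegativity
is `1 + t ≤ exp t` at `t = log g`. In expectation `g - 1` is a control variate, with mean zero
because `Q ≪ P` gives `∫ g dP = 1`; what remains is `-log g = log (dP/dQ)`.
-/

open MeasureTheory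

/-- The Kullback–Leibler divergence `KL(Q‖P) = ∫ log (dQ/dP) dQ` (a real number, defined
for `Q` absolutely continuous with respect to `P`). -/
noncomputable def klDivReal {Y : Type*} [MeasurableSpace Y] (Q P : Measure Y) : ℝ :=
  ∫ y, llr Q P y ∂Q

section

variable {Y : Type*} [MeasurableSpace Y] {P Q : Measure Y}

theorem ae_nonneg_toReal_rnDeriv_sub_llr_sub_one [SigmaFinite P] [SigmaFinite Q] (hPQ : P ≪ Q) :
    ∀ᵐ y ∂P, 0 ≤ (Q.rnDeriv P y).toReal - llr Q P y - 1 := by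
  filter_upwards [exp_llr_of_ac' Q P hPQ] with y h_exp
  rw [← h_exp]
  linarith [Real.add_one_le_exp (llr Q P y)]

theorem klDivReal_eq_neg_integral_llr [SigmaFinite P] [SigmaFinite Q] (hPQ : P ≪ Q) :
    klDivReal P Q = -∫ y, llr Q P y ∂P :=
  calc
    ∫ y, llr P Q y ∂P = ∫ y, -llr Q P y ∂P :=
      integral_congr_ae ((neg_llr hPQ).mono fun _ h => neg_eq_iff_eq_neg.mp h)
    _ = -∫ y, llr Q P y ∂P := integral_neg _

theorem integral_toReal_rnDeriv_sub_llr_sub_one [IsFiniteMeasure P] [IsFiniteMeasure Q]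
    (hQP : Q ≪ P) (h_int : Integrable (llr Q P) P) :
    ∫ y, ((Q.rnDeriv P y).toReal - llr Q P y - 1) ∂P =
      Q.real Set.univ - ∫ y, llr Q P y ∂P - P.real Set.univ := by
  have h_rnDeriv : Integrable (fun y => (Q.rnDeriv P y).toReal) P :=
    Measure.integrable_toReal_rnDeriv
  have h_diff : Integrable (fun y => (Q.rnDeriv P y).toReal - llr Q P y) P :=
    h_rnDeriv.sub h_int
  rw [integral_sub h_diff (integrable_const 1), integral_sub h_rnDeriv h_int,
    Measure.integral_toReal_rnDeriv hQP, integral_const, smul_eq_mul, mul_one]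

theorem kl_estimator_nonneg_and_unbiased_general [IsFiniteMeasure P] [IsFiniteMeasure Q]
    (hPQ : P ≪ Q) (hQP : Q ≪ P)
    (g : Y → ℝ) (hg : g = fun y => (Q.rnDeriv P y).toReal)
    (h_int : Integrable (fun y => Real.log (g y)) P) :
    (∀ᵐ y ∂P, 0 ≤ g y - Real.log (g y) - 1) ∧
    ∫ y, (g y - Real.log (g y) - 1) ∂P =
      klDivReal P Q + (Q.real Set.univ - P.real Set.univ) := by
  subst hg
  refine ⟨ae_nonneg_toReal_rnDeriv_sub_llr_sub_one hPQ, ?_⟩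
  rw [klDivReal_eq_neg_integral_llr hPQ]
  exact (integral_toReal_rnDeriv_sub_llr_sub_one hQP h_int).trans (by ring)

end

/-- **The KL estimator of equation (2).** Let `P` and `Q` be mutually absolutely continuous
probability measures, `g = dQ/dP` the Radon–Nikodym derivative, and assume `log g` is
`P`-integrable. Then `g − log g − 1 ≥ 0` holds `P`-almost everywhere, and
`∫ (g − log g − 1) dP = KL(P‖Q)`. -/
theorem kl_estimator_nonneg_and_unbiased
    {Y : Type*} [MeasurableSpace Y]
    (P Q : Measure Y) [IsProbabilityMeasure P] [IsProbabilityMeasure Q]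
    (hPQ : P ≪ Q) (hQP : Q ≪ P)
    (g : Y → ℝ) (hg : g = fun y => (Q.rnDeriv P y).toReal)
    (h_int : Integrable (fun y => Real.log (g y)) P) :
    (∀ᵐ y ∂P, 0 ≤ g y - Real.log (g y) - 1) ∧
    ∫ y, (g y - Real.log (g y) - 1) ∂P = klDivReal P Q := by
  simpa only [probReal_univ, sub_self, add_zero] using
    kl_estimator_nonneg_and_unbiased_general hPQ hQP g hg h_int
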